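/- arXiv:1907.02135 — 3 statements merged into one kernel-verified Lean document; each statement's English description precedes it below -/
import Mathlib

section
/- The homomorphism ♮ sends α ↦ (1⊗Λ − a(a+1)⊗1)·(b(b+1)⊗1 − c(c+1)⊗1), β ↦ (1⊗Λ − b(b+1)⊗1)·(c(c+1)⊗1 − a(a+1)⊗1), γ ↦ (1⊗Λ − c(c+1)⊗1)·(a(a+1)⊗1 − b(b+1)⊗1), and δ ↦ 1⊗Λ + a(a+1)⊗1 + b(b+1)⊗1 + c(c+1)⊗1. -/
open scoped TensorProduct

noncomputable section

namespace RacahPaper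

variable (F : Type) [Field F]

/-- Defining relations of `U(sl₂)`: generators `e = ι 0`, `f = ι 1`, `h = ι 2` with
`he - eh = 2e`, `hf - fh = -2f`, `ef - fe = h`. -/
inductive slRel : FreeAlgebra F (Fin 3) → FreeAlgebra F (Fin 3) → Prop
  | he : slRel (FreeAlgebra.ι F 2 * FreeAlgebra.ι F 0 - FreeAlgebra.ι F 0 * FreeAlgebra.ι F 2)
      (2 * FreeAlgebra.ι F 0)
  | hf : slRel (FreeAlgebra.ι F 2 * FreeAlgebra.ι F 1 - FreeAlgebra.ι F 1 * FreeAlgebra.ι F 2)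
      (-(2 * FreeAlgebra.ι F 1))
  | ef : slRel (FreeAlgebra.ι F 0 * FreeAlgebra.ι F 1 - FreeAlgebra.ι F 1 * FreeAlgebra.ι F 0)
      (FreeAlgebra.ι F 2)

/-- The universal enveloping algebra `U(sl₂)`. -/
abbrev U := RingQuot (slRel F)

/-- The generator `e` of `U(sl₂)`. -/
def e : U F := RingQuot.mkAlgHom F (slRel F) (FreeAlgebra.ι F 0)

/-- The generator `f` of `U(sl₂)`. -/
def f : U F := RingQuot.mkAlgHom F (slRel F) (FreeAlgebra.ι F 1)

/-- The generator `h` of `U(sl₂)`. -/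
def h : U F := RingQuot.mkAlgHom F (slRel F) (FreeAlgebra.ι F 2)

/-- The equitable generator `x = -f - h/2`. -/
def ux : U F := -f F - (2 : F)⁻¹ • h F

/-- The equitable generator `y = h/2`. -/
def uy : U F := (2 : F)⁻¹ • h F

/-- The equitable generator `z = e - h/2`. -/
def uz : U F := e F - (2 : F)⁻¹ • h F

/-- The normalized Casimir element `Λ = ef + h(h-2)/4` of `U(sl₂)`. -/
def Lam : U F := e F * f F + (4 : F)⁻¹ • (h F * (h F - 2))

/-- `ν_x = f/2`. -/
def nux : U F := (2 : F)⁻¹ • f F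

/-- `ν_z = e/2`. -/
def nuz : U F := (2 : F)⁻¹ • e F

/-- `U_n`: the span of the `e^i h^j f^k` with `k - i = n`. -/
def Usub (n : ℤ) : Submodule F (U F) :=
  Submodule.span F {u : U F | ∃ i j k : ℕ, (k : ℤ) - (i : ℤ) = n ∧ u = e F ^ i * h F ^ j * f F ^ k}

-- Racah algebra
/-- Generator `A` of the free algebra. -/
def fA : FreeAlgebra F (Fin 4) := FreeAlgebra.ι F 0
/-- Generator `B` of the free algebra. -/
def fB : FreeAlgebra F (Fin 4) := FreeAlgebra.ι F 1
/-- Generator `C` of the free algebra. -/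
def fC : FreeAlgebra F (Fin 4) := FreeAlgebra.ι F 2
/-- Generator `D` of the free algebra. -/
def fD : FreeAlgebra F (Fin 4) := FreeAlgebra.ι F 3

/-- `α = [A,D] + AC - BA` in the free algebra. -/
def falpha : FreeAlgebra F (Fin 4) := (fA F * fD F - fD F * fA F) + fA F * fC F - fB F * fA F
/-- `β = [B,D] + BA - CB` in the free algebra. -/
def fbeta : FreeAlgebra F (Fin 4) := (fB F * fD F - fD F * fB F) + fB F * fA F - fC F * fB F
/-- `γ = [C,D] + CB - AC` in the free algebra. -/
def fgamma : FreeAlgebra F (Fin 4) := (fC F * fD F - fD F * fC F) + fC F * fB F - fA F * fC F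

/-- Defining relations of the Racah algebra: `[A,B] = [B,C] = [C,A] = 2D` and each of
`α, β, γ` commutes with each of the generators `A, B, C, D`. -/
inductive racahRel : FreeAlgebra F (Fin 4) → FreeAlgebra F (Fin 4) → Prop
  | AB : racahRel (fA F * fB F - fB F * fA F) (2 * fD F)
  | BC : racahRel (fB F * fC F - fC F * fB F) (2 * fD F)
  | CA : racahRel (fC F * fA F - fA F * fC F) (2 * fD F)
  | calpha (i : Fin 4) : racahRel (falpha F * FreeAlgebra.ι F i) (FreeAlgebra.ι F i * falpha F)
  | cbeta (i : Fin 4) : racahRel (fbeta F * FreeAlgebra.ι F i) (FreeAlgebra.ι F i * fbeta F)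
  | cgamma (i : Fin 4) : racahRel (fgamma F * FreeAlgebra.ι F i) (FreeAlgebra.ι F i * fgamma F)

/-- The Racah algebra `ℜ`. -/
abbrev Racah := RingQuot (racahRel F)

/-- Generator `A` of the Racah algebra. -/
def A : Racah F := RingQuot.mkAlgHom F (racahRel F) (fA F)
/-- Generator `B` of the Racah algebra. -/
def B : Racah F := RingQuot.mkAlgHom F (racahRel F) (fB F)
/-- Generator `C` of the Racah algebra. -/
def C : Racah F := RingQuot.mkAlgHom F (racahRel F) (fC F)
/-- Generator `D` of the Racah algebra. -/
def D : Racah F := RingQuot.mkAlgHom F (racahRel F) (fD F)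

/-- `α = [A,D] + AC - BA` in the Racah algebra. -/
def alpha : Racah F := (A F * D F - D F * A F) + A F * C F - B F * A F
/-- `β = [B,D] + BA - CB` in the Racah algebra. -/
def beta : Racah F := (B F * D F - D F * B F) + B F * A F - C F * B F
/-- `γ = [C,D] + CB - AC` in the Racah algebra. -/
def gamma : Racah F := (C F * D F - D F * C F) + C F * B F - A F * C F
/-- `δ = A + B + C` in the Racah algebra. -/
def delta : Racah F := A F + B F + C F

/-- `Ω_A = D² + (BAC + CAB)/2 + A² + Bγ - Cβ - Aδ`. -/
def OmegaA : Racah F :=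
  D F ^ 2 + (2 : F)⁻¹ • (B F * A F * C F + C F * A F * B F) + A F ^ 2
    + B F * gamma F - C F * beta F - A F * delta F

/-- `Ω_B = D² + (CBA + ABC)/2 + B² + Cα - Aγ - Bδ`. -/
def OmegaB : Racah F :=
  D F ^ 2 + (2 : F)⁻¹ • (C F * B F * A F + A F * B F * C F) + B F ^ 2
    + C F * alpha F - A F * gamma F - B F * delta F

/-- `Ω_C = D² + (ACB + BCA)/2 + C² + Aβ - Bα - Cδ`. -/
def OmegaC : Racah F :=
  D F ^ 2 + (2 : F)⁻¹ • (A F * C F * B F + B F * C F * A F) + C F ^ 2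
    + A F * beta F - B F * alpha F - C F * delta F

-- the tensor algebra F[a,b,c] ⊗ U(sl2)
/-- The polynomial algebra `F[a,b,c]`. -/
abbrev P := MvPolynomial (Fin 3) F

/-- The tensor product algebra `F[a,b,c] ⊗ U(sl₂)`. -/
abbrev T := P F ⊗[F] U F

/-- The indeterminate `a`. -/
def pa : P F := MvPolynomial.X 0
/-- The indeterminate `b`. -/
def pb : P F := MvPolynomial.X 1
/-- The indeterminate `c`. -/
def pc : P F := MvPolynomial.X 2

/-- `A♮`. -/
def Anat : T F :=
  (pa F * (pa F + 1)) ⊗ₜ[F] (1 : U F) + (pb F - pc F - pa F) ⊗ₜ[F] ux F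
    + (pa F + pb F - pc F + 1) ⊗ₜ[F] uy F - (1 : P F) ⊗ₜ[F] (ux F * uy F)

/-- `B♮`. -/
def Bnat : T F :=
  (pb F * (pb F + 1)) ⊗ₜ[F] (1 : U F) + (pc F - pa F - pb F) ⊗ₜ[F] uy F
    + (pb F + pc F - pa F + 1) ⊗ₜ[F] uz F - (1 : P F) ⊗ₜ[F] (uy F * uz F)

/-- `C♮`. -/
def Cnat : T F :=
  (pc F * (pc F + 1)) ⊗ₜ[F] (1 : U F) + (pa F - pb F - pc F) ⊗ₜ[F] uz F
    + (pc F + pa F - pb F + 1) ⊗ₜ[F] ux F - (1 : P F) ⊗ₜ[F] (uz F * ux F)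

/-- `D♮`. -/
def Dnat : T F :=
  (1 : P F) ⊗ₜ[F] (uz F * uy F * ux F + uz F * ux F)
    + (pc F + pb F * (pc F + pa F - pb F)) ⊗ₜ[F] ux F
    + (pa F + pc F * (pa F + pb F - pc F)) ⊗ₜ[F] uy F
    + (pb F + pa F * (pb F + pc F - pa F)) ⊗ₜ[F] uz F
    + (pb F - pc F) ⊗ₜ[F] (ux F * uy F)
    + (pc F - pa F) ⊗ₜ[F] (uy F * uz F)
    + (pa F - pb F) ⊗ₜ[F] (uz F * ux F)

/-- `R = 2 ⊗ yν_x + 2(c+a-b+1) ⊗ ν_x`. -/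
def Rel : T F :=
  (2 : P F) ⊗ₜ[F] (uy F * nux F) + (2 * (pc F + pa F - pb F + 1)) ⊗ₜ[F] nux F

/-- `L = -2 ⊗ yν_z - 2(a-b-c-1) ⊗ ν_z`. -/
def Lel : T F :=
  -((2 : P F) ⊗ₜ[F] (uy F * nuz F)) - (2 * (pa F - pb F - pc F - 1)) ⊗ₜ[F] nuz F

/-- `θ = 1⊗y - b⊗1`. -/
def theta : T F := (1 : P F) ⊗ₜ[F] uy F - pb F ⊗ₜ[F] (1 : U F)

/-- `ϑ = 1⊗y + a⊗1`. -/
def vartheta : T F := (1 : P F) ⊗ₜ[F] uy F + pa F ⊗ₜ[F] (1 : U F)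

/-- `F[a,b,c] ⊗ U_n` as a subspace of `F[a,b,c] ⊗ U(sl₂)`. -/
def TU (n : ℤ) : Submodule F (T F) :=
  Submodule.span F {t : T F | ∃ (p : P F) (u : U F), u ∈ Usub F n ∧ t = p ⊗ₜ[F] u}

section Helpers

variable {R S : Type*} [CommRing R] [Ring S] [Algebra R S]

theorem gen_alpha (a b c : R) (x y z : S)
    (hxy : x * y = y * x + x + y) (hyz : y * z = z * y + y + z) (hxz : x * z = z * x - z - x)
    (A B C D L : S)
    (hA : A = (a * (a + 1)) • (1 : S) + (b - c - a) • x + (a + b - c + 1) • y - x * y)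
    (hB : B = (b * (b + 1)) • (1 : S) + (c - a - b) • y + (b + c - a + 1) • z - y * z)
    (hC : C = (c * (c + 1)) • (1 : S) + (a - b - c) • z + (c + a - b + 1) • x - z * x)
    (hD : D = (z * y * x + z * x) + (c + b * (c + a - b)) • x + (a + c * (a + b - c)) • y
      + (b + a * (b + c - a)) • z + (b - c) • (x * y) + (c - a) • (y * z) + (a - b) • (z * x))
    (hL : L = - (z * x) - z * y - y * x - y) :
    (A * D - D * A) + A * C - B * A =
      (L - (a * (a + 1)) • (1 : S)) * ((b * (b + 1)) • (1 : S) - (c * (c + 1)) • (1 : S)) := by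
  have hxy' : ∀ w, x * (y * w) = y * (x * w) + x * w + y * w := fun w => by
    rw [← mul_assoc, hxy]; simp only [add_mul, mul_assoc]
  have hyz' : ∀ w, y * (z * w) = z * (y * w) + y * w + z * w := fun w => by
    rw [← mul_assoc, hyz]; simp only [add_mul, mul_assoc]
  have hxz' : ∀ w, x * (z * w) = z * (x * w) - z * w - x * w := fun w => by
    rw [← mul_assoc, hxz]; simp only [sub_mul, mul_assoc]
  subst hA hB hC hD hL
  simp only [mul_add (R := S), add_mul (R := S), mul_sub (α := S), sub_mul (α := S), mul_assoc (G := S),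
    smul_mul_assoc, mul_smul_comm, mul_one (M := S), one_mul (M := S), neg_mul (α := S),
    hxy, hyz, hxz, hxy', hyz', hxz']
  module

theorem gen_all (a b c : R) (x y z : S)
    (hxy : x * y = y * x + x + y) (hyz : y * z = z * y + y + z) (hxz : x * z = z * x - z - x)
    (A B C D L : S)
    (hA : A = (a * (a + 1)) • (1 : S) + (b - c - a) • x + (a + b - c + 1) • y - x * y)
    (hB : B = (b * (b + 1)) • (1 : S) + (c - a - b) • y + (b + c - a + 1) • z - y * z)
    (hC : C = (c * (c + 1)) • (1 : S) + (a - b - c) • z + (c + a - b + 1) • x - z * x)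
    (hD : D = (z * y * x + z * x) + (c + b * (c + a - b)) • x + (a + c * (a + b - c)) • y
      + (b + a * (b + c - a)) • z + (b - c) • (x * y) + (c - a) • (y * z) + (a - b) • (z * x))
    (hL : L = - (z * x) - z * y - y * x - y) :
    (A * D - D * A) + A * C - B * A =
      (L - (a * (a + 1)) • (1 : S)) * ((b * (b + 1)) • (1 : S) - (c * (c + 1)) • (1 : S)) ∧
    (B * D - D * B) + B * A - C * B =
      (L - (b * (b + 1)) • (1 : S)) * ((c * (c + 1)) • (1 : S) - (a * (a + 1)) • (1 : S)) ∧
    (C * D - D * C) + C * B - A * C =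
      (L - (c * (c + 1)) • (1 : S)) * ((a * (a + 1)) • (1 : S) - (b * (b + 1)) • (1 : S)) ∧
    A + B + C = L + (a * (a + 1)) • (1 : S) + (b * (b + 1)) • (1 : S)
      + (c * (c + 1)) • (1 : S) := by
  have hzx : z * x = x * z + z + x := by rw [hxz]; abel
  have hyx : y * x = x * y - x - y := by rw [hxy]; abel
  have hzy : z * y = y * z - y - z := by rw [hyz]; abel
  have e1 : x * z * y + x * y = z * y * x + z * x := by
    rw [hxz, sub_mul, sub_mul, mul_assoc z x y, hxy, mul_add, mul_add, mul_assoc]; abel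
  have e2 : y * x * z + y * z = z * y * x + z * x := by
    rw [hyx, sub_mul, sub_mul, mul_assoc x y z, hyz, mul_add, mul_add, ← mul_assoc x z y, ← e1, hzy]
    abel
  refine ⟨gen_alpha a b c x y z hxy hyz hxz A B C D L hA hB hC hD hL,
    gen_alpha b c a y z x hyz hzx hyx B C A D L hB hC hA ?_ ?_,
    gen_alpha c a b z x y hzx hxy hzy C A B D L hC hA hB ?_ ?_, ?_⟩
  · rw [hD, e1]; abel
  · rw [hL, hxz, hxy, hzy]; abel
  · rw [hD, e2]; abel
  · rw [hL, hyx, hzx, hyz]; abel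
  · subst hA hB hC hL
    rw [hxy, hyz]
    module

theorem gen_U (x y z e f : S) (hx : x = -f - y) (hz : z = e - y) (ye : y * e = e * y + e)
    (yf : y * f = f * y - f) (hef : e * f = f * e + y + y) :
    x * y = y * x + x + y ∧ y * z = z * y + y + z ∧ x * z = z * x - z - x ∧
    e * f + (y * y - y) = -(z * x) - z * y - y * x - y := by
  subst hx hz
  refine ⟨?_, ?_, ?_, ?_⟩ <;>
    (simp only [mul_sub, sub_mul, mul_neg, neg_mul, ye, yf, hef]; abel)

end Helpers

theorem U_he : h F * e F - e F * h F = 2 * e F := by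
  have := RingQuot.mkAlgHom_rel F (slRel.he (F := F))
  simpa [e, f, h, map_ofNat] using this
theorem U_hf : h F * f F - f F * h F = -(2 * f F) := by
  have := RingQuot.mkAlgHom_rel F (slRel.hf (F := F))
  simpa [e, f, h, map_ofNat] using this
theorem U_ef : e F * f F - f F * e F = h F := by
  have := RingQuot.mkAlgHom_rel F (slRel.ef (F := F))
  simpa [e, f, h, map_ofNat] using this

theorem U_h (hchar : (2 : F) ≠ 0) : h F = uy F + uy F := by
  rw [uy, ← add_smul]
  have : (2 : F)⁻¹ + 2⁻¹ = 1 := by field_simp; norm_num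
  rw [this, one_smul]

theorem half_cancel (hchar : (2 : F) ≠ 0) {u v : U F} (huv : u + u = v + v) : u = v := by
  have h2 : (2 : F) • u = (2 : F) • v := by rw [two_smul, two_smul, huv]
  exact smul_right_injective _ hchar h2

theorem ye (hchar : (2 : F) ≠ 0) : uy F * e F = e F * uy F + e F := by
  apply half_cancel F hchar
  have := U_he F
  rw [U_h F hchar, sub_eq_iff_eq_add] at this
  rw [← add_mul, this, mul_add, two_mul]; abel
theorem yf (hchar : (2 : F) ≠ 0) : uy F * f F = f F * uy F - f F := by
  apply half_cancel F hchar
  have := U_hf F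
  rw [U_h F hchar, sub_eq_iff_eq_add] at this
  rw [← add_mul, this, mul_add, two_mul]; abel
theorem ef' (hchar : (2 : F) ≠ 0) : e F * f F = f F * e F + uy F + uy F := by
  have := U_ef F
  rw [U_h F hchar, sub_eq_iff_eq_add] at this
  rw [this]; abel

theorem U_all (hchar : (2 : F) ≠ 0) :
    ux F * uy F = uy F * ux F + ux F + uy F ∧ uy F * uz F = uz F * uy F + uy F + uz F ∧
    ux F * uz F = uz F * ux F - uz F - ux F ∧ e F * f F + (uy F * uy F - uy F) =
      -(uz F * ux F) - uz F * uy F - uy F * ux F - uy F :=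
  gen_U (ux F) (uy F) (uz F) (e F) (f F) rfl rfl (ye F hchar) (yf F hchar) (ef' F hchar)
theorem U_xy (hchar : (2 : F) ≠ 0) : ux F * uy F = uy F * ux F + ux F + uy F :=
  (U_all F hchar).1
theorem U_yz (hchar : (2 : F) ≠ 0) : uy F * uz F = uz F * uy F + uy F + uz F :=
  (U_all F hchar).2.1
theorem U_xz (hchar : (2 : F) ≠ 0) : ux F * uz F = uz F * ux F - uz F - ux F :=
  (U_all F hchar).2.2.1
theorem U_L (hchar : (2 : F) ≠ 0) :
    Lam F = -(uz F * ux F) - uz F * uy F - uy F * ux F - uy F := by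
  have h4 : (4 : F)⁻¹ • (h F * (h F - 2)) = uy F * uy F - uy F := by
    have e4 : (4 : F)⁻¹ = 2⁻¹ * 2⁻¹ := by rw [← mul_inv]; norm_num
    have e2 : (2 : U F) = (2 : F) • (1 : U F) := by rw [two_smul, one_add_one_eq_two]
    rw [e4, e2, uy, mul_sub, smul_sub, smul_mul_smul_comm, mul_smul_comm, mul_one, smul_smul,
      mul_assoc, inv_mul_cancel₀ hchar, mul_one]
  rw [Lam, h4]
  exact (U_all F hchar).2.2.2

theorem tmul_eq (p : P F) (u : U F) : p ⊗ₜ[F] u = p • ((1 : P F) ⊗ₜ[F] u) := by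
  rw [TensorProduct.smul_tmul', smul_eq_mul, mul_one]
theorem tmul_one' (p : P F) : p ⊗ₜ[F] (1 : U F) = p • (1 : T F) := tmul_eq F p 1
theorem one_tmul_mul (u v : U F) :
    (1 : P F) ⊗ₜ[F] (u * v) = ((1 : P F) ⊗ₜ[F] u) * ((1 : P F) ⊗ₜ[F] v) := by
  rw [Algebra.TensorProduct.tmul_mul_tmul, mul_one]

theorem statement1 (hchar : (2 : F) ≠ 0) (φ : Racah F →ₐ[F] T F)
    (hA : φ (A F) = Anat F) (hB : φ (B F) = Bnat F)
    (hC : φ (C F) = Cnat F) (hD : φ (D F) = Dnat F) :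
    φ (alpha F) =
      ((1 : P F) ⊗ₜ[F] Lam F - (pa F * (pa F + 1)) ⊗ₜ[F] (1 : U F)) *
        ((pb F * (pb F + 1)) ⊗ₜ[F] (1 : U F) - (pc F * (pc F + 1)) ⊗ₜ[F] (1 : U F)) ∧
    φ (beta F) =
      ((1 : P F) ⊗ₜ[F] Lam F - (pb F * (pb F + 1)) ⊗ₜ[F] (1 : U F)) *
        ((pc F * (pc F + 1)) ⊗ₜ[F] (1 : U F) - (pa F * (pa F + 1)) ⊗ₜ[F] (1 : U F)) ∧
    φ (gamma F) =
      ((1 : P F) ⊗ₜ[F] Lam F - (pc F * (pc F + 1)) ⊗ₜ[F] (1 : U F)) *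
        ((pa F * (pa F + 1)) ⊗ₜ[F] (1 : U F) - (pb F * (pb F + 1)) ⊗ₜ[F] (1 : U F)) ∧
    φ (delta F) =
      (1 : P F) ⊗ₜ[F] Lam F + (pa F * (pa F + 1)) ⊗ₜ[F] (1 : U F)
        + (pb F * (pb F + 1)) ⊗ₜ[F] (1 : U F) + (pc F * (pc F + 1)) ⊗ₜ[F] (1 : U F) := by
  have key := gen_all (S := T F) (pa F) (pb F) (pc F) ((1 : P F) ⊗ₜ[F] ux F) ((1 : P F) ⊗ₜ[F] uy F)
    ((1 : P F) ⊗ₜ[F] uz F)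
    (by rw [← one_tmul_mul, ← one_tmul_mul, U_xy F hchar, TensorProduct.tmul_add,
      TensorProduct.tmul_add])
    (by rw [← one_tmul_mul, ← one_tmul_mul, U_yz F hchar, TensorProduct.tmul_add,
      TensorProduct.tmul_add])
    (by rw [← one_tmul_mul, ← one_tmul_mul, U_xz F hchar, TensorProduct.tmul_sub,
      TensorProduct.tmul_sub])
    (Anat F) (Bnat F) (Cnat F) (Dnat F) ((1 : P F) ⊗ₜ[F] Lam F)
    (by rw [Anat, tmul_one', tmul_eq F _ (ux F), tmul_eq F _ (uy F), one_tmul_mul])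
    (by rw [Bnat, tmul_one', tmul_eq F _ (uy F), tmul_eq F _ (uz F), one_tmul_mul])
    (by rw [Cnat, tmul_one', tmul_eq F _ (uz F), tmul_eq F _ (ux F), one_tmul_mul])
    (by rw [Dnat, tmul_eq F _ (ux F), tmul_eq F _ (uy F), tmul_eq F _ (uz F),
      tmul_eq F _ (ux F * uy F), tmul_eq F _ (uy F * uz F), tmul_eq F (pa F - pb F) (uz F * ux F),
      TensorProduct.tmul_add]; simp only [one_tmul_mul])
    (by rw [U_L F hchar]; simp only [TensorProduct.tmul_sub, TensorProduct.tmul_neg, one_tmul_mul])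
  simp only [alpha, beta, gamma, delta, map_add, map_sub, map_mul, hA, hB, hC, hD, tmul_one']
  exact key

end RacahPaper
end
end

section
/- The F-algebra homomorphism ♮ : ℜ → F[a,b,c] ⊗ U(sl₂) is injective. -/
open scoped TensorProduct

noncomputable section

namespace RacahPaper

variable (F : Type) [Field F]

set_option linter.all false

section abstract_ring

theorem omega_comm {S : Type*} [Ring S] (A B D α β δ : S)
    (hBA : B * A = A * B - (D + D))
    (hDA : D * A = A * D - α + δ * A - A * A - A * B - A * B + D + D)
    (hBD : B * D = D * B + β - A * B - A * B + D + D - B * B + δ * B)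
    (aA : A * α = α * A) (aB : B * α = α * B) (aD : D * α = α * D)
    (bA : A * β = β * A) (bB : B * β = β * B) (bD : D * β = β * D)
    (dA : A * δ = δ * A) (dB : B * δ = δ * B) (dD : D * δ = δ * D)
    (ab : β * α = α * β) (ad : δ * α = α * δ) (bd : δ * β = β * δ) (Ω : S)
    (hΩ : Ω = D * D - A * (A * B) - A * (B * B) + δ * (A * B) - δ * D + A * D + A * D + D * B + D * B
      + D + D - A * B - A * B - α - α * B - δ * β + β * A) :
    Ω * A = A * Ω ∧ Ω * B = B * Ω := by
  have e : ∀ {X Y Z : S}, X * Y = Z → ∀ t, X * (Y * t) = Z * t := by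
    intro X Y Z h t; rw [← mul_assoc, h]
  subst hΩ
  constructor
  · simp only [mul_add, add_mul, mul_sub, sub_mul, mul_assoc, hBA, hDA, hBD, aA, aB, aD, bA, bB, bD,
      dA, dB, dD, ab, ad, bd, e hBA, e hDA, e hBD, e aA, e aB, e aD, e bA, e bB, e bD,
      e dA, e dB, e dD, e ab, e ad, e bd]
    abel
  · simp only [mul_add, add_mul, mul_sub, sub_mul, mul_assoc, hBA, hDA, hBD, aA, aB, aD, bA, bB, bD,
      dA, dB, dD, ab, ad, bd, e hBA, e hDA, e hBD, e aA, e aB, e aD, e bA, e bB, e bD,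
      e dA, e dB, e dD, e ab, e ad, e bd]
    abel

end abstract_ring

section alg_indep

/-- alg closure step -/
theorem alg_core {G R : Type*} [CommRing G] [IsDomain G] [CommRing R] [IsDomain R] [Algebra G R]
    [FaithfulSMul G R]
    (h2 : (2 : R) ≠ 0) (p q r s α β δ Ω : R)
    (hα : α = (q - r) * (s - p)) (hβ : β = (r - p) * (s - q)) (hδ : δ = p + q + r + s)
    (hΩ : Ω = (p * s - q * r) * (p + s - q - r) - (p + s) * (q + r))
    (hd : p + s - q - r ≠ 0)
    (gα : ∃ g : G, algebraMap G R g = α) (gβ : ∃ g : G, algebraMap G R g = β)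
    (gδ : ∃ g : G, algebraMap G R g = δ) (gΩ : ∃ g : G, algebraMap G R g = Ω) :
    IsAlgebraic G p ∧ IsAlgebraic G q ∧ IsAlgebraic G r ∧ IsAlgebraic G s := by
  obtain ⟨α', eα⟩ := gα
  obtain ⟨β', eβ⟩ := gβ
  obtain ⟨δ', eδ⟩ := gδ
  obtain ⟨Ω', eΩ⟩ := gΩ
  have aα : IsAlgebraic G α := eα ▸ isAlgebraic_algebraMap α'
  have aβ : IsAlgebraic G β := eβ ▸ isAlgebraic_algebraMap β'
  have aδ : IsAlgebraic G δ := eδ ▸ isAlgebraic_algebraMap δ'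
  have aΩ : IsAlgebraic G Ω := eΩ ▸ isAlgebraic_algebraMap Ω'
  have a2 : IsAlgebraic G (2 : R) := by
    rw [← map_ofNat (algebraMap G R) 2]; exact isAlgebraic_algebraMap _
  have half : ∀ w : R, IsAlgebraic G (2 * w) → IsAlgebraic G w := fun w hw =>
    IsAlgebraic.of_mul (mem_nonZeroDivisors_of_ne_zero h2) a2 (by simpa [mul_comm] using hw)
  have aE : IsAlgebraic G ((p + s - q - r) ^ 2) := by
    apply IsIntegral.isAlgebraic
    let κ := 2 * β' + α'
    let m := δ' + 1
    let w := 4 * Ω' + δ' ^ 2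
    refine ⟨Polynomial.X ^ 3 + Polynomial.C (4 * κ - m ^ 2) * Polynomial.X ^ 2 +
      Polynomial.C (4 * κ ^ 2 + 2 * m * w - 4 * α' ^ 2) * Polynomial.X +
      Polynomial.C (- w ^ 2), ?_, ?_⟩
    · monicity!
    · simp only [κ, m, w, Polynomial.eval₂_add, Polynomial.eval₂_mul, Polynomial.eval₂_C,
        Polynomial.eval₂_pow, Polynomial.eval₂_X]
      simp only [map_add, map_sub, map_mul, map_pow, map_neg,
        map_one, map_ofNat, eα, eβ, eδ, eΩ]
      rw [hα, hβ, hδ, hΩ]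
      ring
  have ad : IsAlgebraic G (p + s - q - r) := aE.of_pow (by norm_num)
  have aσ1 : IsAlgebraic G (p + s) := half _ (by
    have := aδ.add ad
    rw [hδ] at this
    convert this using 1; ring)
  have aσ2 : IsAlgebraic G (q + r) := half _ (by
    have := aδ.sub ad
    rw [hδ] at this
    convert this using 1; ring)
  have aN := aσ1.mul aσ2
  have aplus : IsAlgebraic G (p * s + q * r) := half _ (by
    have := (aN.sub (a2.mul aβ)).sub aα
    rw [hα, hβ] at this
    convert this using 1; ring)
  have aminus : IsAlgebraic G (p * s - q * r) := by
    refine IsAlgebraic.of_mul (mem_nonZeroDivisors_of_ne_zero hd) ad ?_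
    have := aΩ.add aN
    rw [hΩ] at this
    convert this using 1; ring
  have aπ1 : IsAlgebraic G (p * s) := half _ (by
    have := aplus.add aminus
    convert this using 1; ring)
  have aπ2 : IsAlgebraic G (q * r) := half _ (by
    have := aplus.sub aminus
    convert this using 1; ring)
  have aps : IsAlgebraic G (p - s) := by
    apply IsAlgebraic.of_pow (n := 2) (by norm_num)
    have := (aσ1.mul aσ1).sub ((a2.mul a2).mul aπ1)
    convert this using 1; ring
  have aqr : IsAlgebraic G (q - r) := by
    apply IsAlgebraic.of_pow (n := 2) (by norm_num)
    have := (aσ2.mul aσ2).sub ((a2.mul a2).mul aπ2)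
    convert this using 1; ring
  refine ⟨half _ ?_, half _ ?_, half _ ?_, half _ ?_⟩
  · convert aσ1.add aps using 1; ring
  · convert aσ2.add aqr using 1; ring
  · convert aσ2.sub aqr using 1; ring
  · convert aσ1.sub aps using 1; ring

abbrev R4 := MvPolynomial (Fin 4) F

def sal : R4 F := ((MvPolynomial.X 1 * (MvPolynomial.X 1 + 1)) - (MvPolynomial.X 2 * (MvPolynomial.X 2 + 1)))
  * (MvPolynomial.X 3 - (MvPolynomial.X 0 * (MvPolynomial.X 0 + 1)))
def sbe : R4 F := ((MvPolynomial.X 2 * (MvPolynomial.X 2 + 1)) - (MvPolynomial.X 0 * (MvPolynomial.X 0 + 1)))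
  * (MvPolynomial.X 3 - (MvPolynomial.X 1 * (MvPolynomial.X 1 + 1)))
def sde : R4 F := MvPolynomial.X 0 * (MvPolynomial.X 0 + 1) + MvPolynomial.X 1 * (MvPolynomial.X 1 + 1)
  + MvPolynomial.X 2 * (MvPolynomial.X 2 + 1) + MvPolynomial.X 3
def som : R4 F := ((MvPolynomial.X 0 * (MvPolynomial.X 0 + 1)) * MvPolynomial.X 3
    - (MvPolynomial.X 1 * (MvPolynomial.X 1 + 1)) * (MvPolynomial.X 2 * (MvPolynomial.X 2 + 1))) *
  ((MvPolynomial.X 0 * (MvPolynomial.X 0 + 1)) + MvPolynomial.X 3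
    - (MvPolynomial.X 1 * (MvPolynomial.X 1 + 1)) - (MvPolynomial.X 2 * (MvPolynomial.X 2 + 1))) -
  ((MvPolynomial.X 0 * (MvPolynomial.X 0 + 1)) + MvPolynomial.X 3) *
    ((MvPolynomial.X 1 * (MvPolynomial.X 1 + 1)) + (MvPolynomial.X 2 * (MvPolynomial.X 2 + 1)))

def scal : Fin 4 → R4 F := ![sal F, sbe F, sde F, som F]

theorem scal_indep (hchar : (2 : F) ≠ 0) : AlgebraicIndependent F (scal F) := by
  have h2 : (2 : R4 F) ≠ 0 := by
    intro h
    apply hchar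
    have := congrArg (MvPolynomial.constantCoeff) h
    rwa [map_ofNat, map_zero] at this
  have key : Algebra.IsAlgebraic (Algebra.adjoin F (Set.range (scal F))) (R4 F) := by
    set G := Algebra.adjoin F (Set.range (scal F)) with hG
    have hmem : ∀ i, ∃ g : G, algebraMap G (R4 F) g = scal F i := fun i =>
      ⟨⟨scal F i, Algebra.subset_adjoin ⟨i, rfl⟩⟩, rfl⟩
    obtain ⟨ap, aq, ar, as⟩ := alg_core (G := G) (R := R4 F) h2
      (MvPolynomial.X 0 * (MvPolynomial.X 0 + 1)) (MvPolynomial.X 1 * (MvPolynomial.X 1 + 1))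
      (MvPolynomial.X 2 * (MvPolynomial.X 2 + 1)) (MvPolynomial.X 3) (sal F) (sbe F) (sde F) (som F)
      rfl rfl rfl rfl
      (by
        intro h
        have := congrArg (MvPolynomial.eval (![0, 0, 0, 1] : Fin 4 → F)) h
        simp at this)
      (hmem 0) (hmem 1) (hmem 2) (hmem 3)
    have a2 : IsAlgebraic G (2 : R4 F) := by
      rw [← map_ofNat (algebraMap G (R4 F)) 2]; exact isAlgebraic_algebraMap _
    have a1 : IsAlgebraic G (1 : R4 F) := isAlgebraic_one
    have step : ∀ w : R4 F, IsAlgebraic G (w * (w + 1)) → IsAlgebraic G w := by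
      intro w hw
      refine IsAlgebraic.of_mul (mem_nonZeroDivisors_of_ne_zero h2) a2 ?_
      have h3 : IsAlgebraic G (2 * w + 1) := by
        apply IsAlgebraic.of_pow (n := 2) (by norm_num)
        have := ((a2.mul a2).mul hw).add a1
        have e : (2 * w + 1) ^ 2 = 2 * 2 * (w * (w + 1)) + 1 := by ring
        rwa [e]
      have := h3.sub a1
      have e : w * 2 = 2 * w + 1 - 1 := by ring
      first
        | rwa [e]
        | (rw [mul_comm, e]; exact this)
    have aX : ∀ i, IsAlgebraic G (MvPolynomial.X i : R4 F) := by
      intro i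
      fin_cases i
      · exact step _ ap
      · exact step _ aq
      · exact step _ ar
      · exact as
    constructor
    intro w
    induction w using MvPolynomial.induction_on with
    | C c =>
      exact isAlgebraic_algebraMap (A := R4 F) (algebraMap F G c)
    | add x y hx hy => exact hx.add hy
    | mul_X x i hx => exact hx.mul (aX i)
  refine (Algebra.IsAlgebraic.isTranscendenceBasis_of_le_trdeg_of_finite F (scal F) ?_).1
  rw [MvPolynomial.trdeg_of_isDomain]
  simp

end alg_indep

section repr

abbrev K5 := Polynomial (R4 F)
abbrev M5 := ℤ → K5 F
abbrev E5 := Module.End (K5 F) (M5 F)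

/-- the four central parameters in `K5` -/
def kv (i : Fin 4) : K5 F := Polynomial.C (MvPolynomial.X i)

/-- the variable `y` at site `n` -/
def yy (n : ℤ) : K5 F := Polynomial.X + (n : K5 F)

theorem yy_add (n m : ℤ) : yy F (n + m) = yy F n + (m : K5 F) := by
  simp [yy, add_assoc]

theorem yy_sub_one (n : ℤ) : yy F (n - 1) = yy F n - 1 := by
  simp [yy, add_sub_assoc]

theorem yy_add_one (n : ℤ) : yy F (n + 1) = yy F n + 1 := by
  simp [yy, add_assoc]

def opE : E5 F where
  toFun v n := v (n - 1)
  map_add' _ _ := rfl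
  map_smul' _ _ := rfl

def opF : E5 F where
  toFun v n := (kv F 3 - yy F n * (yy F n + 1)) * v (n + 1)
  map_add' _ _ := by funext n; simp [mul_add]
  map_smul' _ _ := by funext n; simp; ring

def opH : E5 F where
  toFun v n := 2 * yy F n * v n
  map_add' _ _ := by funext n; simp [mul_add]
  map_smul' _ _ := by funext n; simp; ring

theorem opE_apply (v : M5 F) (n : ℤ) : opE F v n = v (n - 1) := rfl
theorem opF_apply (v : M5 F) (n : ℤ) :
  opF F v n = (kv F 3 - yy F n * (yy F n + 1)) * v (n + 1) := rfl
theorem opH_apply (v : M5 F) (n : ℤ) : opH F v n = 2 * yy F n * v n := rfl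

theorem two_mul_apply (g : E5 F) (v : M5 F) (n : ℤ) : (2 * g) v n = 2 * g v n := by
  rw [two_mul, LinearMap.add_apply, Pi.add_apply, two_mul]

def repU : U F →ₐ[F] E5 F :=
  RingQuot.liftAlgHom F ⟨FreeAlgebra.lift F ![opE F, opF F, opH F], by
    intro x y hxy
    cases hxy
    · simp only [map_sub, map_mul, map_ofNat, FreeAlgebra.lift_ι_apply, Matrix.cons_val]
      refine LinearMap.ext fun v => funext fun n => ?_
      simp only [LinearMap.sub_apply, Pi.sub_apply, Module.End.mul_apply, two_mul_apply,
        opE_apply, opH_apply, opF_apply, yy_sub_one, yy_add_one]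
      ring
    · simp only [two_mul, map_add, map_sub, map_mul, map_neg, FreeAlgebra.lift_ι_apply,
        Matrix.cons_val]
      refine LinearMap.ext fun v => funext fun n => ?_
      simp only [LinearMap.sub_apply, LinearMap.add_apply, Pi.add_apply, LinearMap.neg_apply, Pi.neg_apply, Pi.sub_apply,
        Module.End.mul_apply, two_mul_apply,
        opE_apply, opH_apply, opF_apply, yy_sub_one, yy_add_one]
      ring
    · simp only [map_sub, map_mul, map_ofNat, FreeAlgebra.lift_ι_apply, Matrix.cons_val]
      refine LinearMap.ext fun v => funext fun n => ?_
      simp only [LinearMap.sub_apply, Pi.sub_apply, Module.End.mul_apply, two_mul_apply,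
        opE_apply, opH_apply, opF_apply, yy_sub_one, yy_add_one, sub_add_cancel, add_sub_cancel_right]
      ring⟩

theorem repU_e : repU F (e F) = opE F := by
  simp [repU, e, RingQuot.liftAlgHom_mkAlgHom_apply]
theorem repU_f : repU F (f F) = opF F := by
  simp [repU, f, RingQuot.liftAlgHom_mkAlgHom_apply]
theorem repU_h : repU F (h F) = opH F := by
  simp [repU, h, RingQuot.liftAlgHom_mkAlgHom_apply]

theorem half_smul_two (hchar : (2 : F) ≠ 0) (w : K5 F) : (2 : F)⁻¹ • (2 * w) = w := by
  have : (2 : K5 F) * w = (2 : F) • w := by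
    rw [two_mul, two_smul]
  rw [this, smul_smul, inv_mul_cancel₀ hchar, one_smul]

theorem repU_uy (hchar : (2 : F) ≠ 0) (v : M5 F) (n : ℤ) :
    repU F (uy F) v n = yy F n * v n := by
  rw [uy, map_smul, repU_h, LinearMap.smul_apply, Pi.smul_apply, opH_apply, mul_assoc,
    half_smul_two F hchar]

theorem repU_ux (hchar : (2 : F) ≠ 0) (v : M5 F) (n : ℤ) :
    repU F (ux F) v n = -((kv F 3 - yy F n * (yy F n + 1)) * v (n + 1)) - yy F n * v n := by
  have : ux F = -f F - uy F := rfl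
  rw [this, map_sub, map_neg, LinearMap.sub_apply, Pi.sub_apply, repU_uy F hchar, repU_f,
    LinearMap.neg_apply, Pi.neg_apply, opF_apply]

theorem repU_uz (hchar : (2 : F) ≠ 0) (v : M5 F) (n : ℤ) :
    repU F (uz F) v n = v (n - 1) - yy F n * v n := by
  have : uz F = e F - uy F := rfl
  rw [this, map_sub, LinearMap.sub_apply, Pi.sub_apply, repU_uy F hchar, repU_e, opE_apply]

def repP0 : P F →ₐ[F] K5 F := MvPolynomial.aeval ![kv F 0, kv F 1, kv F 2]

def repP : P F →ₐ[F] E5 F := (IsScalarTower.toAlgHom F (K5 F) (E5 F)).comp (repP0 F)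

def repT : T F →ₐ[F] E5 F :=
  Algebra.TensorProduct.lift (repP F) (repU F) (fun p u => by
    change Commute (algebraMap (K5 F) (E5 F) (repP0 F p)) _
    exact Algebra.commutes _ _)

theorem repT_tmul (p : P F) (u : U F) (v : M5 F) (n : ℤ) :
    repT F (p ⊗ₜ[F] u) v n = repP0 F p * repU F u v n := by
  rw [repT, Algebra.TensorProduct.lift_tmul, Module.End.mul_apply]
  change (algebraMap (K5 F) (E5 F) (repP0 F p)) _ n = _
  rw [Module.algebraMap_end_apply]
  rfl

theorem repP0_a : repP0 F (pa F) = kv F 0 := by simp [repP0, pa]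
theorem repP0_b : repP0 F (pb F) = kv F 1 := by simp [repP0, pb]
theorem repP0_c : repP0 F (pc F) = kv F 2 := by simp [repP0, pc]

theorem repT_A (hchar : (2 : F) ≠ 0) (v : M5 F) (n : ℤ) :
    repT F (Anat F) v n = (yy F n + kv F 0) * (yy F n + kv F 0 + 1) * v n +
      (kv F 0 - kv F 1 + kv F 2 + 1 + yy F n) * (kv F 3 - yy F n * (yy F n + 1)) * v (n + 1) := by
  simp only [Anat, map_add, map_sub, LinearMap.add_apply, LinearMap.sub_apply, Pi.add_apply,
    Pi.sub_apply, repT_tmul, map_mul, map_one, Module.End.mul_apply, Module.End.one_apply,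
    repP0_a, repP0_b, repP0_c, repU_ux F hchar, repU_uy F hchar, repU_uz F hchar, yy_add_one,
    yy_sub_one]
  ring

theorem repT_B (hchar : (2 : F) ≠ 0) (v : M5 F) (n : ℤ) :
    repT F (Bnat F) v n = (yy F n - kv F 1) * (yy F n - kv F 1 - 1) * v n +
      (kv F 1 + kv F 2 - kv F 0 + 1 - yy F n) * v (n - 1) := by
  simp only [Bnat, map_add, map_sub, LinearMap.add_apply, LinearMap.sub_apply, Pi.add_apply,
    Pi.sub_apply, repT_tmul, map_mul, map_one, Module.End.mul_apply, Module.End.one_apply,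
    repP0_a, repP0_b, repP0_c, repU_ux F hchar, repU_uy F hchar, repU_uz F hchar, yy_add_one,
    yy_sub_one]
  ring

theorem repT_C (hchar : (2 : F) ≠ 0) (v : M5 F) (n : ℤ) :
    repT F (Cnat F) v n = (kv F 2 * (kv F 2 + 1) + kv F 3 - 2 * yy F n ^ 2
        - 2 * (kv F 0 - kv F 1) * yy F n) * v n -
      (kv F 1 + kv F 2 - kv F 0 + 1 - yy F n) * v (n - 1) -
      (kv F 0 - kv F 1 + kv F 2 + 1 + yy F n) * (kv F 3 - yy F n * (yy F n + 1)) * v (n + 1) := by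
  simp only [Cnat, map_add, map_sub, LinearMap.add_apply, LinearMap.sub_apply, Pi.add_apply,
    Pi.sub_apply, repT_tmul, map_mul, map_one, Module.End.mul_apply, Module.End.one_apply,
    repP0_a, repP0_b, repP0_c, repU_ux F hchar, repU_uy F hchar, repU_uz F hchar, yy_add_one,
    yy_sub_one, sub_add_cancel, add_sub_cancel_right]
  ring

theorem repT_D (hchar : (2 : F) ≠ 0) (v : M5 F) (n : ℤ) :
    repT F (Dnat F) v n =
      (2 * yy F n ^ 3 + 3 * (kv F 0 - kv F 1) * yy F n ^ 2 +
        ((kv F 0 - kv F 1) ^ 2 - kv F 2 * (kv F 2 + 1) - kv F 3) * yy F n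
        - (kv F 0 - kv F 1) * kv F 3) * v n +
      (yy F n + kv F 0) * (kv F 1 + kv F 2 - kv F 0 + 1 - yy F n) * v (n - 1) +
      (yy F n - kv F 1) * (kv F 0 - kv F 1 + kv F 2 + 1 + yy F n) *
        (kv F 3 - yy F n * (yy F n + 1)) * v (n + 1) := by
  simp only [Dnat, map_add, map_sub, LinearMap.add_apply, LinearMap.sub_apply, Pi.add_apply,
    Pi.sub_apply, repT_tmul, map_mul, map_one, Module.End.mul_apply, Module.End.one_apply,
    repP0_a, repP0_b, repP0_c, repU_ux F hchar, repU_uy F hchar, repU_uz F hchar, yy_add_one,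
    yy_sub_one, sub_add_cancel, add_sub_cancel_right]
  ring

theorem repT_sde (hchar : (2 : F) ≠ 0) (v : M5 F) (n : ℤ) :
    repT F (Anat F + Bnat F + Cnat F) v n = Polynomial.C (sde F) * v n := by
  simp only [map_add, LinearMap.add_apply, Pi.add_apply, repT_A F hchar, repT_B F hchar,
    repT_C F hchar, sde, map_mul, map_one]
  simp only [kv]
  ring

theorem repT_sal (hchar : (2 : F) ≠ 0) (v : M5 F) (n : ℤ) :
    repT F (Anat F * Dnat F - Dnat F * Anat F + Anat F * Cnat F - Bnat F * Anat F) v n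
      = Polynomial.C (sal F) * v n := by
  simp only [map_add, map_sub, map_mul, LinearMap.add_apply, LinearMap.sub_apply, Pi.add_apply,
    Pi.sub_apply, Module.End.mul_apply, repT_A F hchar, repT_B F hchar,
    repT_C F hchar, repT_D F hchar, sal, map_one, yy_add_one, yy_sub_one, sub_add_cancel,
    add_sub_cancel_right]
  simp only [kv]
  ring

theorem repT_sbe (hchar : (2 : F) ≠ 0) (v : M5 F) (n : ℤ) :
    repT F (Bnat F * Dnat F - Dnat F * Bnat F + Bnat F * Anat F - Cnat F * Bnat F) v n
      = Polynomial.C (sbe F) * v n := by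
  simp only [map_add, map_sub, map_mul, LinearMap.add_apply, LinearMap.sub_apply, Pi.add_apply,
    Pi.sub_apply, Module.End.mul_apply, repT_A F hchar, repT_B F hchar,
    repT_C F hchar, repT_D F hchar, sbe, map_one, yy_add_one, yy_sub_one, sub_add_cancel,
    add_sub_cancel_right]
  simp only [kv]
  ring

/-- the Casimir in the representation, with given central scalars -/
theorem repT_som (hchar : (2 : F) ≠ 0) (α β δ : T F)
    (hα : ∀ v n, repT F α v n = Polynomial.C (sal F) * v n)
    (hβ : ∀ v n, repT F β v n = Polynomial.C (sbe F) * v n)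
    (hδ : ∀ v n, repT F δ v n = Polynomial.C (sde F) * v n) (v : M5 F) (n : ℤ) :
    repT F (Dnat F * Dnat F - Anat F * (Anat F * Bnat F) - Anat F * (Bnat F * Bnat F)
      + δ * (Anat F * Bnat F) - δ * Dnat F + Anat F * Dnat F + Anat F * Dnat F + Dnat F * Bnat F
      + Dnat F * Bnat F + Dnat F + Dnat F - Anat F * Bnat F - Anat F * Bnat F - α - α * Bnat F
      - δ * β + β * Anat F) v n = Polynomial.C (som F) * v n := by
  simp only [map_add, map_sub, map_mul, LinearMap.add_apply, LinearMap.sub_apply, Pi.add_apply,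
    Pi.sub_apply, Module.End.mul_apply, repT_A F hchar, repT_B F hchar, hα, hβ, hδ,
    repT_D F hchar, sal, sbe, sde, som, map_one, yy_add_one, yy_sub_one, sub_add_cancel,
    add_sub_cancel_right]
  simp only [kv]
  ring

end repr

section topterm

/-- `v` has top site `n` with coefficient of degree `d` in `y` -/
def Top (v : M5 F) (n : ℤ) (d : ℕ) : Prop :=
  v n ≠ 0 ∧ (v n).natDegree = d ∧ ∀ m, n < m → v m = 0

theorem deg_lin (c : R4 F) : (Polynomial.X + Polynomial.C c : K5 F).natDegree = 1 ∧
    (Polynomial.X + Polynomial.C c : K5 F) ≠ 0 :=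
  ⟨Polynomial.natDegree_X_add_C c, Polynomial.X_add_C_ne_zero c⟩

theorem top_mul {w : K5 F} {d : ℕ} (hw : w ≠ 0) (hd : w.natDegree = d) (c : R4 F) :
    (Polynomial.X + Polynomial.C c) * w ≠ 0 ∧
      ((Polynomial.X + Polynomial.C c) * w).natDegree = d + 1 := by
  obtain ⟨h1, h2⟩ := deg_lin F c
  refine ⟨mul_ne_zero h2 hw, ?_⟩
  rw [Polynomial.natDegree_mul h2 hw, h1, hd, add_comm]

theorem Top.A (hchar : (2 : F) ≠ 0) {v : M5 F} {n : ℤ} {d : ℕ} (hv : Top F v n d) :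
    Top F (repT F (Anat F) v) n (d + 2) := by
  obtain ⟨h0, hd, hm⟩ := hv
  obtain ⟨h1, h2⟩ := top_mul F h0 hd ((n : R4 F) + MvPolynomial.X 0 + 1)
  obtain ⟨h3, h4⟩ := top_mul F h1 h2 ((n : R4 F) + MvPolynomial.X 0)
  have e : repT F (Anat F) v n = (Polynomial.X + Polynomial.C ((n : R4 F) + MvPolynomial.X 0)) *
      ((Polynomial.X + Polynomial.C ((n : R4 F) + MvPolynomial.X 0 + 1)) * v n) := by
    rw [repT_A F hchar, hm (n + 1) (by omega)]
    simp only [yy, kv, map_add, map_intCast, map_one]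
    ring
  refine ⟨e ▸ h3, e ▸ h4, fun m hnm => ?_⟩
  rw [repT_A F hchar, hm m hnm, hm (m + 1) (by omega)]
  ring

theorem Top.B (hchar : (2 : F) ≠ 0) {v : M5 F} {n : ℤ} {d : ℕ} (hv : Top F v n d) :
    Top F (repT F (Bnat F) v) (n + 1) (d + 1) := by
  obtain ⟨h0, hd, hm⟩ := hv
  obtain ⟨h1, h2⟩ := top_mul F (w := -v n) (neg_ne_zero.2 h0) (by rw [Polynomial.natDegree_neg, hd])
    ((n : R4 F) - MvPolynomial.X 1 - MvPolynomial.X 2 + MvPolynomial.X 0)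
  have e : repT F (Bnat F) v (n + 1) = (Polynomial.X + Polynomial.C ((n : R4 F) - MvPolynomial.X 1
      - MvPolynomial.X 2 + MvPolynomial.X 0)) * (- v n) := by
    rw [repT_B F hchar, hm (n + 1) (by omega), add_sub_cancel_right, yy_add_one]
    simp only [yy, kv, map_add, map_sub, map_intCast, map_one]
    ring
  refine ⟨e ▸ h1, e ▸ h2, fun m hnm => ?_⟩
  rw [repT_B F hchar, hm m (by omega), hm (m - 1) (by omega)]
  ring

theorem Top.D (hchar : (2 : F) ≠ 0) {v : M5 F} {n : ℤ} {d : ℕ} (hv : Top F v n d) :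
    Top F (repT F (Dnat F) v) (n + 1) (d + 2) := by
  obtain ⟨h0, hd, hm⟩ := hv
  obtain ⟨h1, h2⟩ := top_mul F (w := -v n) (neg_ne_zero.2 h0) (by rw [Polynomial.natDegree_neg, hd])
    ((n : R4 F) - MvPolynomial.X 1 - MvPolynomial.X 2 + MvPolynomial.X 0)
  obtain ⟨h3, h4⟩ := top_mul F h1 h2 ((n : R4 F) + 1 + MvPolynomial.X 0)
  have e : repT F (Dnat F) v (n + 1) = (Polynomial.X + Polynomial.C ((n : R4 F) + 1 +
      MvPolynomial.X 0)) * ((Polynomial.X + Polynomial.C ((n : R4 F) - MvPolynomial.X 1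
      - MvPolynomial.X 2 + MvPolynomial.X 0)) * (- v n)) := by
    rw [repT_D F hchar, hm (n + 1) (by omega), hm (n + 1 + 1) (by omega), add_sub_cancel_right,
      yy_add_one]
    simp only [yy, kv, map_add, map_sub, map_intCast, map_one]
    ring
  refine ⟨e ▸ h3, e ▸ h4, fun m hnm => ?_⟩
  rw [repT_D F hchar, hm m (by omega), hm (m - 1) (by omega), hm (m + 1) (by omega)]
  ring

/-- index set for the monomials `A^i D^ε B^k` -/
abbrev J := ℕ × Bool × ℕ

def monT (j : J) : T F := Anat F ^ j.1 * ((if j.2.1 then Dnat F else 1) * Bnat F ^ j.2.2)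

def vac : M5 F := Pi.single 0 1

theorem top_monT (hchar : (2 : F) ≠ 0) (j : J) :
    Top F (repT F (monT F j) (vac F)) ((j.2.2 : ℤ) + if j.2.1 then 1 else 0)
      (j.2.2 + (if j.2.1 then 2 else 0) + 2 * j.1) := by
  obtain ⟨i, ε, k⟩ := j
  have h0 : Top F (vac F) 0 0 := by
    refine ⟨?_, ?_, ?_⟩
    · simp [vac]
    · simp [vac]
    · intro m hm
      simp [vac, hm.ne']
  have hB : Top F (repT F (Bnat F ^ k) (vac F)) k k := by
    induction k with
    | zero => simpa using h0
    | succ k ih =>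
      rw [pow_succ', map_mul, Module.End.mul_apply]
      simpa using ih.B F hchar
  have hD : Top F (repT F ((if ε then Dnat F else 1) * Bnat F ^ k) (vac F))
      ((k : ℤ) + if ε then 1 else 0) (k + (if ε then 2 else 0)) := by
    cases ε
    · simpa using hB
    · rw [map_mul, Module.End.mul_apply]
      simpa using hB.D F hchar
  simp only [monT]
  induction i with
  | zero => simpa using hD
  | succ i ih =>
    rw [pow_succ', mul_assoc, map_mul, Module.End.mul_apply]
    have := ih.A F hchar
    rw [show 2 * (i + 1) = 2 * i + 2 by ring, ← add_assoc]
    exact this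

theorem top_indep {ι : Type*} (v : ι → M5 F) (n : ι → ℤ) (d : ι → ℕ)
    (hv : ∀ j, Top F (v j) (n j) (d j)) (hinj : ∀ i j, n i = n j → d i = d j → i = j)
    (s : Finset ι) (c : ι → R4 F)
    (hs : ∀ m : ℤ, ∑ j ∈ s, Polynomial.C (c j) * v j m = 0) : ∀ j ∈ s, c j = 0 := by
  classical
  by_contra hcon
  push Not at hcon
  obtain ⟨j0, hj0, hc0⟩ := hcon
  obtain ⟨j, hj, hmax⟩ := Finset.exists_max_image (s.filter fun j => c j ≠ 0)
    (fun j => toLex (n j, d j)) ⟨j0, by simp [hj0, hc0]⟩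
  rw [Finset.mem_filter] at hj
  have h1 := congrArg (fun w => Polynomial.coeff w (d j)) (hs (n j))
  simp only [Polynomial.finset_sum_coeff, Polynomial.coeff_C_mul, Polynomial.coeff_zero] at h1
  rw [Finset.sum_eq_single_of_mem j hj.1] at h1
  · obtain ⟨h0, hd, hm⟩ := hv j
    rcases mul_eq_zero.1 h1 with h | h
    · exact hj.2 h
    · rw [← hd] at h
      exact h0 (Polynomial.leadingCoeff_eq_zero.1 h)
  · intro i hi hij
    by_cases hci : c i = 0
    · rw [hci, zero_mul]
    have hle := hmax i (by simp [hi, hci])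
    obtain ⟨h0, hd, hm⟩ := hv i
    rw [Prod.Lex.toLex_le_toLex] at hle
    rcases hle with hlt | ⟨heq, hle⟩
    · rw [hm _ hlt]; simp
    · simp only at heq hle
      have : d i < d j := lt_of_le_of_ne hle fun hdd => hij (hinj i j heq hdd)
      rw [← heq, Polynomial.coeff_eq_zero_of_natDegree_lt (hd ▸ this), mul_zero]

end topterm

section racah

theorem r_AB : A F * B F - B F * A F = 2 * D F := by
  have := RingQuot.mkAlgHom_rel F (racahRel.AB (F := F))
  simp only [map_sub, map_mul, map_ofNat] at this
  exact this
theorem r_BC : B F * C F - C F * B F = 2 * D F := by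
  have := RingQuot.mkAlgHom_rel F (racahRel.BC (F := F))
  simp only [map_sub, map_mul, map_ofNat] at this
  exact this
theorem r_CA : C F * A F - A F * C F = 2 * D F := by
  have := RingQuot.mkAlgHom_rel F (racahRel.CA (F := F))
  simp only [map_sub, map_mul, map_ofNat] at this
  exact this

theorem mk_alpha : RingQuot.mkAlgHom F (racahRel F) (falpha F) = alpha F := by
  simp only [falpha, map_sub, map_add, map_mul]; rfl
theorem mk_beta : RingQuot.mkAlgHom F (racahRel F) (fbeta F) = beta F := by
  simp only [fbeta, map_sub, map_add, map_mul]; rfl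

def gen (i : Fin 4) : Racah F := RingQuot.mkAlgHom F (racahRel F) (FreeAlgebra.ι F i)

theorem alpha_gen (i : Fin 4) : gen F i * alpha F = alpha F * gen F i := by
  have := RingQuot.mkAlgHom_rel F (racahRel.calpha (F := F) i)
  rw [map_mul, map_mul, mk_alpha] at this
  exact this.symm
theorem beta_gen (i : Fin 4) : gen F i * beta F = beta F * gen F i := by
  have := RingQuot.mkAlgHom_rel F (racahRel.cbeta (F := F) i)
  rw [map_mul, map_mul, mk_beta] at this
  exact this.symm

/-- induction principle for left ideals-like subsets: generated by generators -/
theorem racah_induction (p : Racah F → Prop) (hF : ∀ c : F, p (algebraMap F _ c))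
    (hg : ∀ i, p (gen F i)) (hadd : ∀ x y, p x → p y → p (x + y))
    (hmul : ∀ x y, p x → p y → p (x * y)) (w : Racah F) : p w := by
  obtain ⟨w, rfl⟩ := RingQuot.mkAlgHom_surjective F (racahRel F) w
  induction w using FreeAlgebra.induction with
  | grade0 c => rw [AlgHom.commutes]; exact hF c
  | grade1 i => exact hg i
  | mul x y hx hy => rw [map_mul]; exact hmul _ _ hx hy
  | add x y hx hy => rw [map_add]; exact hadd _ _ hx hy

theorem central_of_gen (z : Racah F) (hz : ∀ i, gen F i * z = z * gen F i) (w : Racah F) :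
    w * z = z * w := by
  induction w using racah_induction F with
  | hF c => exact Algebra.commutes c z
  | hg i => exact hz i
  | hadd x y hx hy => rw [add_mul, mul_add, hx, hy]
  | hmul x y hx hy => rw [mul_assoc, hy, ← mul_assoc, hx, mul_assoc]

theorem two_cancel (hchar : (2 : F) ≠ 0) {x y : Racah F} (h : 2 * x = 2 * y) : x = y := by
  have e : ∀ w : Racah F, 2 * w = (2 : F) • w := fun w => by rw [two_mul, two_smul]
  rw [e, e] at h
  have := congrArg (fun w => (2 : F)⁻¹ • w) h
  simpa [smul_smul, inv_mul_cancel₀ hchar] using this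

/-- an element commuting with `A` and `B` commutes with `D` -/
theorem comm_D (hchar : (2 : F) ≠ 0) (z : Racah F) (hA : A F * z = z * A F)
    (hB : B F * z = z * B F) : D F * z = z * D F := by
  apply two_cancel F hchar
  have h1 : 2 * (D F * z) = (A F * B F - B F * A F) * z := by rw [r_AB, mul_assoc]
  have h2 : 2 * (z * D F) = z * (A F * B F - B F * A F) := by
    rw [r_AB, two_mul, two_mul, mul_add]
  have e1 : A F * B F * z = z * (A F * B F) := by rw [mul_assoc, hB, ← mul_assoc, hA, mul_assoc]
  have e2 : B F * A F * z = z * (B F * A F) := by rw [mul_assoc, hA, ← mul_assoc, hB, mul_assoc]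
  rw [h1, h2, sub_mul, mul_sub, e1, e2]

theorem delta_A : A F * delta F = delta F * A F := by
  have h1 := r_AB F
  have h2 := r_CA F
  have : A F * delta F - delta F * A F
      = (A F * B F - B F * A F) - (C F * A F - A F * C F) := by
    rw [delta]; noncomm_ring
  rw [h1, h2, sub_self] at this
  exact sub_eq_zero.1 this

theorem delta_B : B F * delta F = delta F * B F := by
  have h1 := r_AB F
  have h2 := r_BC F
  have : B F * delta F - delta F * B F
      = (B F * C F - C F * B F) - (A F * B F - B F * A F) := by
    rw [delta]; noncomm_ring
  rw [h1, h2, sub_self] at this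
  exact sub_eq_zero.1 this

theorem C_eq : C F = delta F - A F - B F := by rw [delta]; abel

theorem central_of_AB (hchar : (2 : F) ≠ 0) (z : Racah F) (hA : A F * z = z * A F)
    (hB : B F * z = z * B F) (w : Racah F)
    (hδ : delta F * z = z * delta F) : w * z = z * w := by
  refine central_of_gen F z (fun i => ?_) w
  fin_cases i
  · exact hA
  · exact hB
  · change C F * z = z * C F
    rw [C_eq, sub_mul, sub_mul, mul_sub, mul_sub, hA, hB, hδ]
  · exact comm_D F hchar z hA hB

theorem delta_central (hchar : (2 : F) ≠ 0) (w : Racah F) : w * delta F = delta F * w :=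
  central_of_AB F hchar _ (delta_A F) (delta_B F) w rfl
theorem alpha_central (w : Racah F) : w * alpha F = alpha F * w :=
  central_of_gen F _ (alpha_gen F) w
theorem beta_central (w : Racah F) : w * beta F = beta F * w :=
  central_of_gen F _ (beta_gen F) w

theorem n_BA : B F * A F = A F * B F - (D F + D F) := by
  rw [← two_mul, ← r_AB]; abel

theorem n_DA (hchar : (2 : F) ≠ 0) : D F * A F = A F * D F - alpha F + delta F * A F - A F * A F
    - A F * B F - A F * B F + D F + D F := by
  have h1 : alpha F = (A F * D F - D F * A F) + A F * (delta F - A F - B F) - B F * A F := by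
    rw [← C_eq]; rfl
  rw [h1, n_BA, mul_sub, mul_sub, delta_A]
  abel

theorem n_BD (hchar : (2 : F) ≠ 0) : B F * D F = D F * B F + beta F - A F * B F - A F * B F
    + D F + D F - B F * B F + delta F * B F := by
  have h1 : beta F = (B F * D F - D F * B F) + B F * A F - (delta F - A F - B F) * B F := by
    rw [← C_eq]; rfl
  rw [h1, n_BA, sub_mul, sub_mul]
  abel

def omg : Racah F := D F * D F - A F * (A F * B F) - A F * (B F * B F) + delta F * (A F * B F)
  - delta F * D F + A F * D F + A F * D F + D F * B F + D F * B F
  + D F + D F - A F * B F - A F * B F - alpha F - alpha F * B F - delta F * beta F + beta F * A F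

theorem omg_central (hchar : (2 : F) ≠ 0) (w : Racah F) : w * omg F = omg F * w := by
  obtain ⟨h1, h2⟩ := omega_comm (A F) (B F) (D F) (alpha F) (beta F) (delta F) (n_BA F)
    (n_DA F hchar) (n_BD F hchar) (alpha_central F _) (alpha_central F _) (alpha_central F _)
    (beta_central F _) (beta_central F _) (beta_central F _) (delta_central F hchar _)
    (delta_central F hchar _) (delta_central F hchar _) (alpha_central F _) (alpha_central F _)
    (beta_central F _) (omg F) rfl
  exact central_of_AB F hchar _ h1.symm h2.symm w (delta_central F hchar _).symm

def zgen : Fin 4 → Racah F := ![alpha F, beta F, delta F, omg F]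

theorem zgen_central (hchar : (2 : F) ≠ 0) (i : Fin 4) (w : Racah F) :
    w * zgen F i = zgen F i * w := by
  fin_cases i
  · exact alpha_central F w
  · exact beta_central F w
  · exact delta_central F hchar w
  · exact omg_central F hchar w

/-- the central subalgebra map -/
def zmap (hchar : (2 : F) ≠ 0) : MvPolynomial (Fin 4) F →ₐ[F] Racah F :=
  (Subalgebra.center F (Racah F)).val.comp (MvPolynomial.aeval fun i =>
    (⟨zgen F i, Subalgebra.mem_center_iff.2 fun w => zgen_central F hchar i w⟩ :
      Subalgebra.center F (Racah F)))

theorem zmap_X (hchar : (2 : F) ≠ 0) (i : Fin 4) :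
    zmap F hchar (MvPolynomial.X i) = zgen F i := by
  simp [zmap]

theorem zmap_central (hchar : (2 : F) ≠ 0) (p : MvPolynomial (Fin 4) F) (w : Racah F) :
    w * zmap F hchar p = zmap F hchar p * w :=
  Subalgebra.mem_center_iff.1 (Subtype.prop (MvPolynomial.aeval (fun i =>
    (⟨zgen F i, Subalgebra.mem_center_iff.2 fun w => zgen_central F hchar i w⟩ :
      Subalgebra.center F (Racah F))) p)) w

def monR (j : J) : Racah F := A F ^ j.1 * ((if j.2.1 then D F else 1) * B F ^ j.2.2)

/-- span of the monomials over the central subalgebra -/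
def WR (hchar : (2 : F) ≠ 0) : Submodule (zmap F hchar).range (Racah F) :=
  Submodule.span _ (Set.range (monR F))

section
variable (hchar : (2 : F) ≠ 0)

theorem WR_z (i : Fin 4) {w : Racah F} (hw : w ∈ WR F hchar) : zgen F i * w ∈ WR F hchar := by
  have := (WR F hchar).smul_mem ⟨zgen F i, ⟨MvPolynomial.X i, zmap_X F hchar i⟩⟩ hw
  exact this

theorem WR_sub {x y : Racah F} (hx : x ∈ WR F hchar) (hy : y ∈ WR F hchar) :
    x - y ∈ WR F hchar := by
  have h : zmap F hchar (-1) * y ∈ WR F hchar :=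
    (WR F hchar).smul_mem ⟨zmap F hchar (-1), ⟨-1, rfl⟩⟩ hy
  have e : zmap F hchar (-1) * y = -y := by
    apply eq_neg_of_add_eq_zero_left
    have e1 : zmap F hchar (-1) * y + y = zmap F hchar (-1 + 1) * y := by
      rw [map_add, map_one, add_mul, one_mul]
    rw [e1, neg_add_cancel, map_zero, zero_mul]
  rw [e] at h
  rw [sub_eq_add_neg]
  exact add_mem hx h

theorem WR_add {x y : Racah F} (hx : x ∈ WR F hchar) (hy : y ∈ WR F hchar) :
    x + y ∈ WR F hchar := add_mem hx hy

theorem WR_mon (j : J) : monR F j ∈ WR F hchar := Submodule.subset_span ⟨j, rfl⟩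

theorem WR_left (X : Racah F) (hX : ∀ j, X * monR F j ∈ WR F hchar) {w : Racah F}
    (hw : w ∈ WR F hchar) : X * w ∈ WR F hchar := by
  induction hw using Submodule.span_induction with
  | mem x hx => obtain ⟨j, rfl⟩ := hx; exact hX j
  | zero => rw [mul_zero]; exact zero_mem _
  | add x y _ _ hx hy => rw [mul_add]; exact add_mem hx hy
  | smul a x _ hx =>
    obtain ⟨a, p, rfl⟩ := a
    have : X * (zmap F hchar p * x) = zmap F hchar p * (X * x) := by
      rw [← mul_assoc, zmap_central, mul_assoc]
    have h2 := (WR F hchar).smul_mem ⟨_, p, rfl⟩ hx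
    change X * (zmap F hchar p * x) ∈ _
    rw [this]
    exact h2

theorem WR_A {w : Racah F} (hw : w ∈ WR F hchar) : A F * w ∈ WR F hchar := by
  refine WR_left F hchar _ (fun j => ?_) hw
  have : A F * monR F j = monR F (j.1 + 1, j.2) := by
    simp only [monR]; rw [pow_succ', mul_assoc]
  rw [this]; exact WR_mon F hchar _

theorem WR_Bk (k : ℕ) : B F ^ k ∈ WR F hchar := by
  have : B F ^ k = monR F (0, false, k) := by simp [monR]
  rw [this]; exact WR_mon F hchar _

theorem WR_DBk (k : ℕ) : D F * B F ^ k ∈ WR F hchar := by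
  have : D F * B F ^ k = monR F (0, true, k) := by simp [monR]
  rw [this]; exact WR_mon F hchar _

theorem WR_BDBk (k : ℕ) : B F * (D F * B F ^ k) ∈ WR F hchar := by
  have e : B F * (D F * B F ^ k) = D F * B F ^ (k + 1) + beta F * B F ^ k
      - A F * B F ^ (k + 1) - A F * B F ^ (k + 1) + D F * B F ^ k + D F * B F ^ k - B F ^ (k + 2)
      + delta F * B F ^ (k + 1) := by
    rw [← mul_assoc, n_BD F hchar]
    simp only [add_mul, sub_mul, pow_succ', mul_assoc]
  rw [e]
  have h1 := WR_Bk F hchar k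
  have h2 := WR_Bk F hchar (k + 1)
  have h3 := WR_Bk F hchar (k + 2)
  have h4 := WR_DBk F hchar k
  have h5 := WR_DBk F hchar (k + 1)
  exact add_mem (WR_sub F hchar (add_mem (add_mem (WR_sub F hchar (WR_sub F hchar (add_mem h5 (WR_z F hchar 1 h1))
    (WR_A F hchar h2)) (WR_A F hchar h2)) h4) h4) h3) (WR_z F hchar 2 h2)

set_option maxHeartbeats 2000000 in
theorem WR_DDBk (k : ℕ) : D F * (D F * B F ^ k) ∈ WR F hchar := by
  have e0 : D F * D F = omg F + A F * (A F * B F) + A F * (B F * B F) - delta F * (A F * B F)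
      + delta F * D F - A F * D F - A F * D F - D F * B F - D F * B F
      - D F - D F + A F * B F + A F * B F + alpha F + alpha F * B F + delta F * beta F
      - beta F * A F := by
    rw [omg]; abel
  have e : D F * (D F * B F ^ k) = omg F * B F ^ k + A F * (A F * B F ^ (k + 1))
      + A F * B F ^ (k + 2) - delta F * (A F * B F ^ (k + 1))
      + delta F * (D F * B F ^ k) - A F * (D F * B F ^ k) - A F * (D F * B F ^ k)
      - D F * B F ^ (k + 1) - D F * B F ^ (k + 1)
      - D F * B F ^ k - D F * B F ^ k + A F * B F ^ (k + 1) + A F * B F ^ (k + 1)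
      + alpha F * B F ^ k + alpha F * B F ^ (k + 1) + delta F * (beta F * B F ^ k)
      - beta F * (A F * B F ^ k) := by
    rw [← mul_assoc, e0]
    simp only [add_mul, sub_mul, pow_succ', mul_assoc]
  rw [e]
  have h1 := WR_Bk F hchar k
  have h2 := WR_Bk F hchar (k + 1)
  have h3 := WR_Bk F hchar (k + 2)
  have h4 := WR_DBk F hchar k
  have h5 := WR_DBk F hchar (k + 1)
  have hα : ∀ {w}, w ∈ WR F hchar → alpha F * w ∈ WR F hchar := fun h => WR_z F hchar 0 h
  have hβ : ∀ {w}, w ∈ WR F hchar → beta F * w ∈ WR F hchar := fun h => WR_z F hchar 1 h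
  have hδ : ∀ {w}, w ∈ WR F hchar → delta F * w ∈ WR F hchar := fun h => WR_z F hchar 2 h
  have hΩ : ∀ {w}, w ∈ WR F hchar → omg F * w ∈ WR F hchar := fun h => WR_z F hchar 3 h
  have hA : ∀ {w}, w ∈ WR F hchar → A F * w ∈ WR F hchar := fun h => WR_A F hchar h
  have a1 := hΩ h1
  have a2 := hA (hA h2)
  have a3 := hA h3
  have a4 := hδ (hA h2)
  have a5 := hδ h4
  have a6 := hA h4
  have a7 := hA h2
  have a8 := hα h1
  have a9 := hα h2
  have a10 := hδ (hβ h1)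
  have a11 := hβ (hA h1)
  repeat' first
    | assumption
    | refine WR_add F hchar ?_ ?_
    | refine WR_sub F hchar ?_ ?_

theorem WR_BD_mon (j : J) : B F * monR F j ∈ WR F hchar ∧ D F * monR F j ∈ WR F hchar := by
  obtain ⟨i, ε, k⟩ := j
  induction i with
  | zero =>
    cases ε
    · have e : monR F (0, false, k) = B F ^ k := by simp [monR]
      rw [e, ← pow_succ']
      exact ⟨WR_Bk F hchar _, WR_DBk F hchar _⟩
    · have e : monR F (0, true, k) = D F * B F ^ k := by simp [monR]
      rw [e]
      exact ⟨WR_BDBk F hchar _, WR_DDBk F hchar _⟩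
  | succ i ih =>
    obtain ⟨hB, hD⟩ := ih
    have hw := WR_mon F hchar (i, ε, k)
    have e : monR F (i + 1, ε, k) = A F * monR F (i, ε, k) := by
      simp only [monR]; rw [pow_succ', mul_assoc]
    rw [e]
    generalize monR F (i, ε, k) = w at *
    have hA : ∀ {w}, w ∈ WR F hchar → A F * w ∈ WR F hchar := fun h => WR_A F hchar h
    constructor
    · have : B F * (A F * w) = A F * (B F * w) - (D F * w + D F * w) := by
        rw [← mul_assoc, n_BA]; simp only [add_mul, sub_mul, mul_assoc]
      rw [this]
      exact WR_sub F hchar (hA hB) (add_mem hD hD)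
    · have : D F * (A F * w) = A F * (D F * w) - alpha F * w + delta F * (A F * w)
          - A F * (A F * w) - A F * (B F * w) - A F * (B F * w) + D F * w + D F * w := by
        rw [← mul_assoc, n_DA F hchar]; simp only [add_mul, sub_mul, mul_assoc]
      rw [this]
      have a1 : alpha F * w ∈ WR F hchar := WR_z F hchar 0 hw
      have a2 : delta F * (A F * w) ∈ WR F hchar := WR_z F hchar 2 (hA hw)
      have a3 := hA (hA hw)
      have a4 := hA hB
      have a5 := hA hD
      repeat' first
        | assumption
        | refine WR_add F hchar ?_ ?_
        | refine WR_sub F hchar ?_ ?_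

theorem WR_top (w : Racah F) : w ∈ WR F hchar := by
  have key : ∀ w : Racah F, ∀ v ∈ WR F hchar, w * v ∈ WR F hchar := by
    intro w
    induction w using racah_induction F with
    | hF c =>
      intro v hv
      have := (WR F hchar).smul_mem ⟨algebraMap F _ c, ⟨MvPolynomial.C c, (zmap F hchar).commutes c⟩⟩ hv
      exact this
    | hg i =>
      intro v hv
      have hA : A F * v ∈ WR F hchar := WR_A F hchar hv
      have hB : B F * v ∈ WR F hchar := WR_left F hchar _ (fun j => (WR_BD_mon F hchar j).1) hv
      have hD : D F * v ∈ WR F hchar := WR_left F hchar _ (fun j => (WR_BD_mon F hchar j).2) hv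
      fin_cases i
      · exact hA
      · exact hB
      · change C F * v ∈ _
        rw [C_eq, sub_mul, sub_mul]
        exact WR_sub F hchar (WR_sub F hchar (WR_z F hchar 2 hv) hA) hB
      · exact hD
    | hadd x y hx hy => intro v hv; rw [add_mul]; exact add_mem (hx v hv) (hy v hv)
    | hmul x y hx hy => intro v hv; rw [mul_assoc]; exact hx _ (hy v hv)
  have := key w 1 (by simpa using WR_Bk F hchar 0)
  rwa [mul_one] at this

end

end racah

theorem statement3 (hchar : (2 : F) ≠ 0) (φ : Racah F →ₐ[F] T F)
    (hA : φ (A F) = Anat F) (hB : φ (B F) = Bnat F)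
    (hC : φ (C F) = Cnat F) (hD : φ (D F) = Dnat F) :
    Function.Injective φ := by
  rw [injective_iff_map_eq_zero]
  intro w hw
  have hα : ∀ v n, repT F (φ (alpha F)) v n = Polynomial.C (sal F) * v n := by
    intro v n
    rw [← repT_sal F hchar]
    simp only [alpha, map_add, map_sub, map_mul, hA, hB, hC, hD]
  have hβ : ∀ v n, repT F (φ (beta F)) v n = Polynomial.C (sbe F) * v n := by
    intro v n
    rw [← repT_sbe F hchar]
    simp only [beta, map_add, map_sub, map_mul, hA, hB, hC, hD]
  have hδ : ∀ v n, repT F (φ (delta F)) v n = Polynomial.C (sde F) * v n := by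
    intro v n
    rw [← repT_sde F hchar]
    simp only [delta, map_add, hA, hB, hC]
  have hΩ : ∀ v n, repT F (φ (omg F)) v n = Polynomial.C (som F) * v n := by
    intro v n
    rw [← repT_som F hchar _ _ _ hα hβ hδ]
    simp only [omg, map_add, map_sub, map_mul, hA, hB, hD]
  have hz : ∀ (p : MvPolynomial (Fin 4) F) (v : M5 F) (n : ℤ),
      repT F (φ (zmap F hchar p)) v n
        = Polynomial.C (MvPolynomial.aeval (scal F) p) * v n := by
    intro p
    induction p using MvPolynomial.induction_on with
    | C c =>
      intro v n
      rw [← MvPolynomial.algebraMap_eq, AlgHom.commutes, AlgHom.commutes, AlgHom.commutes,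
        AlgHom.commutes, Module.algebraMap_end_apply, Pi.smul_apply, Algebra.smul_def]
      rfl
    | add x y hx hy =>
      intro v n
      simp only [map_add, LinearMap.add_apply, Pi.add_apply, hx, hy, add_mul]
    | mul_X x i hx =>
      intro v n
      simp only [map_mul, Module.End.mul_apply, hx, zmap_X, MvPolynomial.aeval_X, mul_assoc]
      congr 1
      fin_cases i
      · exact hα v n
      · exact hβ v n
      · exact hδ v n
      · exact hΩ v n
  have hmon : ∀ j, φ (monR F j) = monT F j := by
    rintro ⟨i, ε, k⟩
    cases ε <;> simp [monR, monT, hA, hB, hD]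
  have hmem := WR_top F hchar w
  rw [WR, Finsupp.mem_span_range_iff_exists_finsupp] at hmem
  obtain ⟨c, rfl⟩ := hmem
  have hch : ∀ z : (zmap F hchar).range, ∃ p, zmap F hchar p = z := fun z => z.2
  choose g hg using hch
  have hzero := top_indep F (fun j => repT F (monT F j) (vac F))
    (fun j : J => (j.2.2 : ℤ) + if j.2.1 then 1 else 0)
    (fun j : J => j.2.2 + (if j.2.1 then 2 else 0) + 2 * j.1)
    (top_monT F hchar) (by
      rintro ⟨i, ε, k⟩ ⟨i', ε', k'⟩ h1 h2
      cases ε <;> cases ε' <;> simp at h1 h2 ⊢ <;> omega)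
    c.support (fun j => MvPolynomial.aeval (scal F) (g (c j))) (by
      intro m
      have h1 : repT F (φ (c.sum fun i a => a • monR F i)) (vac F) m = 0 := by
        rw [hw, map_zero]; rfl
      rw [Finsupp.sum, map_sum, map_sum, LinearMap.sum_apply, Finset.sum_apply] at h1
      rw [← h1]
      refine Finset.sum_congr rfl fun j _ => ?_
      rw [← hz, hg, ← hmon]
      change _ = repT F (φ ((c j : Racah F) * monR F j)) (vac F) m
      rw [map_mul, map_mul, Module.End.mul_apply])
  have hinj : Function.Injective (MvPolynomial.aeval (scal F) : MvPolynomial (Fin 4) F →ₐ[F] R4 F) :=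
    scal_indep F hchar
  apply Finset.sum_eq_zero
  intro j hj
  have h1 := hzero j hj
  have h2 : g (c j) = 0 := hinj (by rw [h1, map_zero])
  have h3 : (c j : Racah F) = 0 := by rw [← hg, h2, map_zero]
  change (c j : Racah F) * monR F j = 0
  rw [h3, zero_mul]

end RacahPaper
end
end

section
/- The following equations hold in F[a,b,c] ⊗ U(sl₂): RL = (1⊗y + (c+a−b+1)⊗1)(1⊗y + (a−b−c)⊗1)(1⊗y(y+1) − 1⊗Λ), and LR = (1⊗y + (c+a−b)⊗1)(1⊗y + (a−b−c−1)⊗1)(1⊗y(y−1) − 1⊗Λ). Moreover, each of RL, LR, and [R,L] lies in F[a,b,c] ⊗ U_0 (is homogeneous of degree 0). -/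
open scoped TensorProduct

noncomputable section

namespace RacahPaper

variable (F : Type) [Field F]

theorem rel_he : h F * e F = e F * h F + 2 * e F := by
  have := RingQuot.mkAlgHom_rel F (slRel.he (F := F))
  simp only [map_sub, map_mul, map_ofNat] at this
  exact sub_eq_iff_eq_add'.mp this

theorem rel_hf : h F * f F = f F * h F - 2 * f F := by
  have := RingQuot.mkAlgHom_rel F (slRel.hf (F := F))
  simp only [map_sub, map_mul, map_ofNat, map_neg] at this
  rw [sub_eq_add_neg (f F * h F)]
  exact sub_eq_iff_eq_add'.mp this

theorem rel_ef : e F * f F = f F * e F + h F := by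
  have := RingQuot.mkAlgHom_rel F (slRel.ef (F := F))
  simp only [map_sub, map_mul] at this
  exact sub_eq_iff_eq_add'.mp this

theorem h_epow (i : ℕ) : h F * e F ^ i = e F ^ i * h F + (2 * i : F) • e F ^ i := by
  induction i with
  | zero => simp
  | succ n ih =>
    have h2 : (2 : U F) * e F = (2 : F) • e F := by
      rw [two_mul, two_smul]
    rw [pow_succ, ← mul_assoc, ih, add_mul, mul_assoc, rel_he, h2, mul_add, mul_smul_comm,
      smul_mul_assoc, add_assoc, ← add_smul, ← mul_assoc]
    congr 2
    push_cast
    ring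

theorem h_mem {u : U F} (hu : u ∈ Usub F 0) : h F * u ∈ Usub F 0 := by
  unfold Usub at hu ⊢
  induction hu using Submodule.span_induction with
  | mem x hx =>
    obtain ⟨i, j, k, hk, rfl⟩ := hx
    have : h F * (e F ^ i * h F ^ j * f F ^ k) =
        e F ^ i * h F ^ (j + 1) * f F ^ k + (2 * i : F) • (e F ^ i * h F ^ j * f F ^ k) := by
      rw [← mul_assoc, ← mul_assoc, h_epow, add_mul, add_mul, smul_mul_assoc, smul_mul_assoc,
        pow_succ' (h F), ← mul_assoc]
    rw [this]
    exact Submodule.add_mem _ (Submodule.subset_span ⟨i, j + 1, k, hk, rfl⟩)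
      (Submodule.smul_mem _ _ (Submodule.subset_span ⟨i, j, k, hk, rfl⟩))
  | zero => simp
  | add x y _ _ hx hy => rw [mul_add]; exact Submodule.add_mem _ hx hy
  | smul r x _ hx => rw [mul_smul_comm]; exact Submodule.smul_mem _ _ hx

theorem yp_mem (p : P F) {t : T F} (ht : t ∈ TU F 0) :
    ((1 : P F) ⊗ₜ[F] uy F + p ⊗ₜ[F] (1 : U F)) * t ∈ TU F 0 := by
  unfold TU at ht ⊢
  induction ht using Submodule.span_induction with
  | mem x hx =>
    obtain ⟨q, u, hu, rfl⟩ := hx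
    rw [add_mul, Algebra.TensorProduct.tmul_mul_tmul, Algebra.TensorProduct.tmul_mul_tmul]
    refine Submodule.add_mem _ (Submodule.subset_span ⟨_, _, ?_, rfl⟩)
      (Submodule.subset_span ⟨_, _, ?_, rfl⟩)
    · rw [uy, smul_mul_assoc]
      exact Submodule.smul_mem _ _ (h_mem F hu)
    · rwa [one_mul]
  | zero => simp
  | add x y _ _ hx hy => rw [mul_add]; exact Submodule.add_mem _ hx hy
  | smul r x _ hx => rw [mul_smul_comm]; exact Submodule.smul_mem _ _ hx

theorem two_y (hchar : (2 : F) ≠ 0) : 2 * uy F = h F := by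
  rw [uy, two_mul, ← two_smul F ((2 : F)⁻¹ • h F), smul_smul, mul_inv_cancel₀ hchar, one_smul]

theorem y_e (hchar : (2 : F) ≠ 0) : e F * uy F = (uy F - 1) * e F := by
  have h2 : (2 : F)⁻¹ • (2 * e F) = e F := by
    rw [two_mul, ← two_smul F, smul_smul, inv_mul_cancel₀ hchar, one_smul]
  rw [uy, sub_mul, smul_mul_assoc, rel_he, smul_add, h2, mul_smul_comm]
  simp

theorem y_f (hchar : (2 : F) ≠ 0) : f F * uy F = (uy F + 1) * f F := by
  have h2 : (2 : F)⁻¹ • (2 * f F) = f F := by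
    rw [two_mul, ← two_smul F, smul_smul, inv_mul_cancel₀ hchar, one_smul]
  rw [uy, add_mul, smul_mul_assoc, rel_hf, smul_sub, h2, mul_smul_comm]
  simp

theorem gen1 {A : Type*} [Ring A] (y : A) : 2 * y * (2 * y - 2) = 4 * (y * (y - 1)) := by
  have : (4 : A) = 2 + 2 := by norm_num
  rw [this]
  simp only [two_mul, add_mul, mul_sub, mul_add, mul_one, mul_two]

theorem gen2 {A : Type*} [Ring A] (y l : A) : y * (y + 1) - l = (y * (y - 1) - l) + 2 * y := by
  simp only [two_mul, mul_sub, mul_add, mul_one]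
  abel

theorem lam_ef (hchar : (2 : F) ≠ 0) : uy F * (uy F - 1) - Lam F = -(e F * f F) := by
  have h4 : (4 : F)⁻¹ • (h F * (h F - 2)) = uy F * (uy F - 1) := by
    have : h F * (h F - 2) = (4 : F) • (uy F * (uy F - 1)) := by
      rw [← two_y F hchar, Algebra.smul_def, map_ofNat]
      exact gen1 _
    have h40 : (4 : F) ≠ 0 := by
      have : (4 : F) = 2 * 2 := by norm_num
      rw [this]; exact mul_ne_zero hchar hchar
    rw [this, smul_smul, inv_mul_cancel₀ h40, one_smul]
  rw [Lam, h4]; abel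

theorem lam_fe (hchar : (2 : F) ≠ 0) : uy F * (uy F + 1) - Lam F = -(f F * e F) := by
  have h1 := lam_ef F hchar
  rw [rel_ef, ← two_y F hchar] at h1
  have : uy F * (uy F + 1) - Lam F = (uy F * (uy F - 1) - Lam F) + 2 * uy F := gen2 _ _
  rw [this, h1]; abel

theorem R_eq (hchar : (2 : F) ≠ 0) : Rel F =
    ((1 : P F) ⊗ₜ[F] uy F + (pc F + pa F - pb F + 1) ⊗ₜ[F] (1 : U F)) * ((1 : P F) ⊗ₜ[F] f F) := by
  have key : ∀ (p : P F) (u : U F), (2 * p) ⊗ₜ[F] ((2 : F)⁻¹ • u) = p ⊗ₜ[F] u := by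
    intro p u
    rw [two_mul, ← two_smul F, TensorProduct.smul_tmul, smul_smul, mul_inv_cancel₀ hchar, one_smul]
  have k1 := key 1 (uy F * f F)
  rw [mul_one] at k1
  rw [Rel, nux, key, mul_smul_comm, k1, add_mul]
  simp only [Algebra.TensorProduct.tmul_mul_tmul, one_mul, mul_one]

theorem gen3 {A : Type*} [Ring A] (y l : A) : y * (-l) = -(y * l) := mul_neg _ _

theorem gen4 {A : Type*} [Ring A] (y l : A) : (-y) * l = -(y * l) := neg_mul _ _

theorem gen5 {A : Type*} [Ring A] (y l m : A) (hh : y * l = m * y) : (-y) * l = m * (-y) := by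
  rw [neg_mul, mul_neg, hh]

theorem L_eq (hchar : (2 : F) ≠ 0) : Lel F =
    ((1 : P F) ⊗ₜ[F] uy F + (pa F - pb F - pc F - 1) ⊗ₜ[F] (1 : U F)) *
      ((1 : P F) ⊗ₜ[F] (-e F)) := by
  have key : ∀ (p : P F) (u : U F), (2 * p) ⊗ₜ[F] ((2 : F)⁻¹ • u) = p ⊗ₜ[F] u := by
    intro p u
    rw [two_mul, ← two_smul F, TensorProduct.smul_tmul, smul_smul, mul_inv_cancel₀ hchar, one_smul]
  have k1 := key 1 (uy F * e F)
  rw [mul_one] at k1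
  rw [Lel, nuz, key, mul_smul_comm, k1, add_mul, sub_eq_add_neg]
  simp only [Algebra.TensorProduct.tmul_mul_tmul, one_mul, mul_one]
  rw [gen3 (uy F), TensorProduct.tmul_neg, TensorProduct.tmul_neg]

theorem f_comm (hchar : (2 : F) ≠ 0) (p : P F) :
    ((1 : P F) ⊗ₜ[F] f F) * ((1 : P F) ⊗ₜ[F] uy F + p ⊗ₜ[F] (1 : U F)) =
    ((1 : P F) ⊗ₜ[F] uy F + (p + 1) ⊗ₜ[F] (1 : U F)) * ((1 : P F) ⊗ₜ[F] f F) := by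
  simp only [mul_add, add_mul, Algebra.TensorProduct.tmul_mul_tmul, one_mul, mul_one, y_f F hchar,
    TensorProduct.add_tmul, TensorProduct.tmul_add]
  abel

theorem e_comm (hchar : (2 : F) ≠ 0) (p : P F) :
    ((1 : P F) ⊗ₜ[F] e F) * ((1 : P F) ⊗ₜ[F] uy F + (p + 1) ⊗ₜ[F] (1 : U F)) =
    ((1 : P F) ⊗ₜ[F] uy F + p ⊗ₜ[F] (1 : U F)) * ((1 : P F) ⊗ₜ[F] e F) := by
  simp only [mul_add, add_mul, sub_mul, Algebra.TensorProduct.tmul_mul_tmul, one_mul, mul_one,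
    y_e F hchar, TensorProduct.add_tmul, TensorProduct.tmul_sub]
  abel

theorem yy_comm (p q : P F) :
    ((1 : P F) ⊗ₜ[F] uy F + p ⊗ₜ[F] (1 : U F)) * ((1 : P F) ⊗ₜ[F] uy F + q ⊗ₜ[F] (1 : U F)) =
    ((1 : P F) ⊗ₜ[F] uy F + q ⊗ₜ[F] (1 : U F)) * ((1 : P F) ⊗ₜ[F] uy F + p ⊗ₜ[F] (1 : U F)) := by
  simp only [mul_add, add_mul, Algebra.TensorProduct.tmul_mul_tmul, one_mul, mul_one, mul_comm p q]
  abel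

theorem ef_mem : e F * f F ∈ Usub F 0 :=
  Submodule.subset_span ⟨1, 0, 1, by simp, by simp⟩

theorem fe_mem : f F * e F ∈ Usub F 0 := by
  have : f F * e F = e F * f F - h F := by rw [rel_ef]; abel
  rw [this]
  exact Submodule.sub_mem _ (ef_mem F) (Submodule.subset_span ⟨0, 1, 0, by simp, by simp⟩)

theorem statement16 (hchar : (2 : F) ≠ 0) :
    Rel F * Lel F =
      ((1 : P F) ⊗ₜ[F] uy F + (pc F + pa F - pb F + 1) ⊗ₜ[F] (1 : U F)) *
        ((1 : P F) ⊗ₜ[F] uy F + (pa F - pb F - pc F) ⊗ₜ[F] (1 : U F)) *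
        ((1 : P F) ⊗ₜ[F] (uy F * (uy F + 1)) - (1 : P F) ⊗ₜ[F] Lam F) ∧
    Lel F * Rel F =
      ((1 : P F) ⊗ₜ[F] uy F + (pc F + pa F - pb F) ⊗ₜ[F] (1 : U F)) *
        ((1 : P F) ⊗ₜ[F] uy F + (pa F - pb F - pc F - 1) ⊗ₜ[F] (1 : U F)) *
        ((1 : P F) ⊗ₜ[F] (uy F * (uy F - 1)) - (1 : P F) ⊗ₜ[F] Lam F) ∧
    Rel F * Lel F ∈ TU F 0 ∧ Lel F * Rel F ∈ TU F 0 ∧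
    Rel F * Lel F - Lel F * Rel F ∈ TU F 0 := by
  have hRL : Rel F * Lel F =
      ((1 : P F) ⊗ₜ[F] uy F + (pc F + pa F - pb F + 1) ⊗ₜ[F] (1 : U F)) *
        (((1 : P F) ⊗ₜ[F] uy F + (pa F - pb F - pc F) ⊗ₜ[F] (1 : U F)) *
        ((1 : P F) ⊗ₜ[F] (-(f F * e F)))) := by
    have h1 := f_comm F hchar (pa F - pb F - pc F - 1)
    rw [sub_add_cancel] at h1
    rw [R_eq F hchar, L_eq F hchar, mul_assoc, ← mul_assoc (_ ⊗ₜ[F] f F), h1, mul_assoc,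
      Algebra.TensorProduct.tmul_mul_tmul, one_mul, gen3 (f F)]
  have hLR : Lel F * Rel F =
      ((1 : P F) ⊗ₜ[F] uy F + (pc F + pa F - pb F) ⊗ₜ[F] (1 : U F)) *
        (((1 : P F) ⊗ₜ[F] uy F + (pa F - pb F - pc F - 1) ⊗ₜ[F] (1 : U F)) *
        ((1 : P F) ⊗ₜ[F] (-(e F * f F)))) := by
    have h1 : ((1 : P F) ⊗ₜ[F] (-e F)) *
        ((1 : P F) ⊗ₜ[F] uy F + (pc F + pa F - pb F + 1) ⊗ₜ[F] (1 : U F)) =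
        ((1 : P F) ⊗ₜ[F] uy F + (pc F + pa F - pb F) ⊗ₜ[F] (1 : U F)) *
        ((1 : P F) ⊗ₜ[F] (-e F)) := by
      rw [TensorProduct.tmul_neg]
      exact gen5 _ _ _ (e_comm F hchar (pc F + pa F - pb F))
    rw [R_eq F hchar, L_eq F hchar, mul_assoc, ← mul_assoc (_ ⊗ₜ[F] (-e F)), h1, mul_assoc,
      Algebra.TensorProduct.tmul_mul_tmul, one_mul, gen4 (e F),
      ← mul_assoc, ← mul_assoc, yy_comm]
  have mRL : Rel F * Lel F ∈ TU F 0 := by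
    rw [hRL]
    exact yp_mem F _ (yp_mem F _ (Submodule.subset_span
      ⟨_, _, Submodule.neg_mem _ (fe_mem F), rfl⟩))
  have mLR : Lel F * Rel F ∈ TU F 0 := by
    rw [hLR]
    exact yp_mem F _ (yp_mem F _ (Submodule.subset_span
      ⟨_, _, Submodule.neg_mem _ (ef_mem F), rfl⟩))
  refine ⟨?_, ?_, mRL, mLR, Submodule.sub_mem _ mRL mLR⟩
  · rw [hRL, ← TensorProduct.tmul_sub, lam_fe F hchar, mul_assoc]
  · rw [hLR, ← TensorProduct.tmul_sub, lam_ef F hchar, mul_assoc]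


end RacahPaper
end
end
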